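/- For every even integer n ≥ 4, the set of values of the permanent on Λ̂_n(−1,2,1) equals {4^j : 1 ≤ j ≤ ⌊n/4⌋}, and for every odd integer n ≥ 3 it equals {2·4^j : 0 ≤ j ≤ ⌊(n−3)/4⌋}. -/

import Mathlib

open Matrix

/-- `Λ̂_n(α,β,γ)`: matrices `α·Sᵀ + β·I + γ·S` where `S` is the permutation matrix of a
permutation of `{1,…,n}` all of whose cycles have length at least 3 (note `Sᵀ = S⁻¹`). -/
def LambdaHat (n : ℕ) (α β γ : ℝ) : Set (Matrix (Fin n) (Fin n) ℝ) :=
  {A | ∃ s : Equiv.Perm (Fin n), (∀ x, s x ≠ x ∧ s (s x) ≠ x) ∧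
    A = α • ((s⁻¹).permMatrix ℝ) + β • (1 : Matrix (Fin n) (Fin n) ℝ) + γ • (s.permMatrix ℝ)}

/-!
The permanent of `a S⁻¹ + b I + c S` is multiplicative over the cycles of the permutation. For a
single cycle of length `k`, Laplace expansion of the cyclic band matrix along its first column
leaves tridiagonal Toeplitz permanents, which are Dickson polynomials of the second kind in `b`,
and two triangular minors contributing `a ^ k` and `c ^ k`; the total is
`a ^ k + c ^ k + D_k(b, -a c)` with `D_k` the Dickson polynomial of the first kind. At
`(a, b, c) = (-1, 2, 1)` we have `D_k(2, 1) = 2`, so an even cycle contributes the factor `4` and an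
odd cycle the factor `2`. Only the partitions of `n` into parts of size at least `3` remain: pairing
off odd parts shows that the product is `4 ^ j * 2 ^ (n % 2)` with `4 * j + 3 * (n % 2) ≤ n`, and
taking all parts but one equal to `4` realises every such `j`.
-/

section Permanent

open Equiv Finset

variable {R m n : Type*} [CommSemiring R] [Fintype m] [Fintype n] [DecidableEq m] [DecidableEq n]

theorem permanent_submatrix_equiv_self (e : n ≃ m) (A : Matrix m m R) :
    (A.submatrix e e).permanent = A.permanent := by
  refine Fintype.sum_equiv e.permCongr _ _ fun σ ↦ Fintype.prod_equiv e _ _ fun i ↦ ?_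
  simp

theorem permanent_fromBlocks_zero₂₁ (A : Matrix m m R) (B : Matrix m n R) (D : Matrix n n R) :
    (fromBlocks A B 0 D).permanent = A.permanent * D.permanent := by
  simp only [permanent, sum_mul_sum, ← sum_product', univ_product_univ]
  symm
  refine sum_of_injOn (Perm.sumCongrHom m n) Perm.sumCongrHom_injective.injOn
    (fun _ _ ↦ mem_coe.2 (mem_univ _)) (fun σ _ hσ ↦ ?_) fun σ _ ↦ by simp
  obtain ⟨i, k, hk⟩ : ∃ i k, σ (Sum.inl i) = Sum.inr k := by
    by_contra! h
    refine hσ ?_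
    rw [coe_univ, Set.image_univ]
    refine Perm.mem_sumCongrHom_range_of_perm_mapsTo_inl ?_
    rintro _ ⟨i, rfl⟩
    cases hi : σ (Sum.inl i) with
    | inl j => exact ⟨j, rfl⟩
    | inr k => exact absurd hi (h i k)
  exact prod_eq_zero (mem_univ (Sum.inl i)) (by rw [hk, fromBlocks_apply₂₁, Matrix.zero_apply])

theorem permanent_of_isUpperTriangular [LinearOrder m] {A : Matrix m m R}
    (hA : A.IsUpperTriangular) : A.permanent = ∏ i, A i i := by
  refine (sum_eq_single 1 (fun σ _ hσ ↦ ?_) (by simp)).trans (by simp)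
  obtain ⟨i, hi⟩ : ∃ i, i < σ i := by
    by_contra! hle
    refine hσ (Perm.ext fun i ↦ ?_)
    induction i using WellFoundedLT.induction with
    | ind i ih => exact (hle i).eq_of_not_lt fun hlt ↦ hlt.ne (σ.injective (ih _ hlt))
  exact prod_eq_zero (mem_univ i) (hA hi)

theorem permanent_of_isLowerTriangular [LinearOrder m] {A : Matrix m m R}
    (hA : A.IsLowerTriangular) : A.permanent = ∏ i, A i i := by
  rw [← permanent_transpose]
  exact permanent_of_isUpperTriangular hA.transpose

theorem permanent_succ_column_zero {k : ℕ} (A : Matrix (Fin (k + 1)) (Fin (k + 1)) R) :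
    A.permanent = ∑ i, A i 0 * (A.submatrix i.succAbove Fin.succ).permanent := by
  rw [permanent, univ_perm_fin_succ, ← univ_product_univ]
  simp only [sum_map, Equiv.toEmbedding_apply, sum_product]
  refine sum_congr rfl fun i _ ↦ ?_
  cases i using Fin.cases with
  | zero => simp [Fin.prod_univ_succ, permanent, mul_sum]
  | succ i =>
    rw [← permanent_permute_cols i.cycleRange, permanent, mul_sum]
    simp [Fin.prod_univ_succ, Fin.succAbove_cycleRange]

theorem permanent_succ_row_zero {k : ℕ} (A : Matrix (Fin (k + 1)) (Fin (k + 1)) R) :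
    A.permanent = ∑ j, A 0 j * (A.submatrix Fin.succ j.succAbove).permanent := by
  rw [← permanent_transpose, permanent_succ_column_zero]
  exact sum_congr rfl fun j _ ↦ by rw [← permanent_transpose]; rfl

theorem permanent_of_row_zero {k : ℕ} {a c : R} {A : Matrix (Fin (k + 1)) (Fin (k + 1)) R}
    (hA : ∀ j, A 0 j = (if j = 0 then c else 0) + if j = Fin.last k then a else 0) :
    A.permanent = c * (A.submatrix Fin.succ Fin.succ).permanent +
      a * (A.submatrix Fin.succ Fin.castSucc).permanent := by
  simp [permanent_succ_row_zero A, hA, add_mul, sum_add_distrib, ite_mul, Fin.succAbove_last]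

end Permanent

section PermBand

open Equiv Finset Polynomial

variable {R : Type*} [CommRing R]

/-- The matrix `a S⁻¹ + b I + c S`, where `S` is the permutation matrix of `s`. Cycles of length `1`
and `2` are allowed; the coefficients falling on the same entry are then added. -/
def permBand {α : Type*} [DecidableEq α] (a b c : R) (s : Perm α) : Matrix α α R :=
  a • s⁻¹.permMatrix R + b • (1 : Matrix α α R) + c • s.permMatrix R

/-- The tridiagonal Toeplitz matrix with constant diagonals `a` (below), `b` and `c` (above): the
minor of a cyclic band matrix obtained by deleting its first row and column. -/
def tridiagonalToeplitz (a b c : R) (n : ℕ) : Matrix (Fin n) (Fin n) R :=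
  of fun i j ↦ (if i = j then b else 0) + (if (i : ℕ) + 1 = j then c else 0) +
    (if (j : ℕ) + 1 = i then a else 0)

theorem permBand_apply {α : Type*} [DecidableEq α] (a b c : R) (s : Perm α) (i j : α) :
    permBand a b c s i j =
      (if i = j then b else 0) + (if s i = j then c else 0) + (if s j = i then a else 0) := by
  have h : s.symm i = j ↔ s j = i := by rw [Equiv.symm_apply_eq, eq_comm]
  simp only [permBand, Matrix.add_apply, Matrix.smul_apply, Perm.permMatrix,
    PEquiv.toMatrix_apply, toPEquiv_apply, Perm.coe_inv, Option.mem_def, Option.some.injEq, h,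
    one_apply, smul_eq_mul, mul_ite, mul_one, mul_zero]
  ring

variable (a b c : R)

theorem permanent_tridiagonalToeplitz : ∀ n,
    (tridiagonalToeplitz a b c n).permanent = (dickson 2 (-(a * c)) n).eval b
  | 0 => by rw [permanent_isEmpty, dickson_zero]; norm_num
  | 1 => by simp [tridiagonalToeplitz]
  | n + 2 => by
    set T := tridiagonalToeplitz a b c (n + 2)
    have entry_zero : T 0 0 = b := by simp [T, tridiagonalToeplitz]
    have entry_one : T 1 0 = a := by simp [T, tridiagonalToeplitz]
    have minor_zero :
        T.submatrix (Fin.succAbove 0) Fin.succ = tridiagonalToeplitz a b c (n + 1) := by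
      ext i j
      simp [T, tridiagonalToeplitz]
    have minor_one : (T.submatrix (Fin.succAbove 1) Fin.succ).permanent =
        c * (tridiagonalToeplitz a b c n).permanent := by
      rw [permanent_of_row_zero (a := 0) (c := c), zero_mul, add_zero]
      · congr 2
        ext i j
        simp [T, tridiagonalToeplitz]
      · intro j
        simp only [T, tridiagonalToeplitz, submatrix_apply, of_apply, Fin.ext_iff, Fin.val_succ,
          Fin.one_succAbove_zero, Fin.val_zero]
        grind
    rw [permanent_succ_column_zero, Fin.sum_univ_succ, Fin.sum_univ_succ, Fin.succ_zero_eq_one,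
      entry_zero, entry_one, minor_zero, minor_one, permanent_tridiagonalToeplitz,
      permanent_tridiagonalToeplitz, sum_eq_zero, dickson_add_two]
    · simp only [eval_sub, eval_mul, eval_X, eval_C]
      ring
    · simp [T, tridiagonalToeplitz]

theorem dickson_one_add_two (r : R) : ∀ n,
    dickson 1 r (n + 2) = X * dickson 2 r (n + 1) - 2 * C r * dickson 2 r n
  | 0 => by simp only [zero_add, dickson_add_two, dickson_one, dickson_zero]; ring
  | 1 => by simp only [dickson_add_two, zero_add, dickson_one, dickson_zero]; ring
  | n + 2 => by
    rw [dickson_add_two, dickson_one_add_two, dickson_one_add_two,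
      dickson_add_two 2 r (n + 1), dickson_add_two 2 r n]
    ring

theorem permBand_finRotate_apply {n : ℕ} (i j : Fin (n + 1)) :
    permBand a b c (finRotate (n + 1)) i j =
      (if (i : ℕ) = j then b else 0) +
        (if (if (i : ℕ) = n then 0 else (i : ℕ) + 1) = j then c else 0) +
        (if (if (j : ℕ) = n then 0 else (j : ℕ) + 1) = i then a else 0) := by
  simp only [permBand_apply, Fin.ext_iff, coe_finRotate, Fin.val_last]

theorem permBand_finRotate_zero_succ {n : ℕ} (j : Fin (n + 1)) :
    permBand a b c (finRotate (n + 2)) 0 j.succ =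
      (if j = 0 then c else 0) + (if j = Fin.last n then a else 0) := by
  simp only [permBand_finRotate_apply, Fin.ext_iff, Fin.val_succ, Fin.val_zero, Fin.val_last]
  grind

theorem permBand_finRotate_zero_column {n : ℕ} (i : Fin (n + 2)) :
    permBand a b c (finRotate (n + 2)) i 0 =
      (if i = 0 then b else 0) + (if i = Fin.last (n + 1) then c else 0) +
        (if i = 1 then a else 0) := by
  simp only [permBand_finRotate_apply, Fin.ext_iff, Fin.val_zero, Fin.val_one, Fin.val_last]
  grind

theorem permBand_finRotate_submatrix_succ (n : ℕ) :
    (permBand a b c (finRotate (n + 1))).submatrix Fin.succ Fin.succ =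
      tridiagonalToeplitz a b c n := by
  ext i j
  simp only [submatrix_apply, permBand_finRotate_apply, tridiagonalToeplitz, of_apply, Fin.ext_iff,
    Fin.val_succ]
  grind

theorem permanent_permBand_finRotate_submatrix_succAbove_one (n : ℕ) :
    ((permBand a b c (finRotate (n + 2))).submatrix (Fin.succAbove 1) Fin.succ).permanent =
      c * (tridiagonalToeplitz a b c n).permanent + a ^ (n + 1) := by
  set M := (permBand a b c (finRotate (n + 2))).submatrix (Fin.succAbove 1) Fin.succ
  have minor_first : M.submatrix Fin.succ Fin.succ = tridiagonalToeplitz a b c n := by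
    ext i j
    simp only [M, submatrix_apply, Fin.one_succAbove_succ, permBand_finRotate_apply,
      tridiagonalToeplitz, of_apply, Fin.ext_iff, Fin.val_succ]
    grind
  have minor_last_diag (i : Fin n) : M.submatrix Fin.succ Fin.castSucc i i = a := by
    simp only [M, submatrix_apply, Fin.one_succAbove_succ, permBand_finRotate_apply, Fin.val_succ,
      Fin.val_castSucc]
    grind
  have minor_last_upper : (M.submatrix Fin.succ Fin.castSucc).IsUpperTriangular := by
    intro i j hij
    simp only [M, submatrix_apply, Fin.one_succAbove_succ, permBand_finRotate_apply, Fin.val_succ,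
      Fin.val_castSucc]
    grind
  rw [permanent_of_row_zero (permBand_finRotate_zero_succ a b c), minor_first,
    permanent_of_isUpperTriangular minor_last_upper]
  simp only [minor_last_diag, prod_const, card_univ, Fintype.card_fin, pow_succ']

theorem permanent_permBand_finRotate_submatrix_castSucc (n : ℕ) :
    ((permBand a b c (finRotate (n + 2))).submatrix Fin.castSucc Fin.succ).permanent =
      a * (tridiagonalToeplitz a b c n).permanent + c ^ (n + 1) := by
  set M := (permBand a b c (finRotate (n + 2))).submatrix Fin.castSucc Fin.succ
  have minor_last : M.submatrix Fin.succ Fin.castSucc = tridiagonalToeplitz a b c n := by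
    ext i j
    simp only [M, submatrix_apply, Fin.castSucc_succ, permBand_finRotate_apply,
      tridiagonalToeplitz, of_apply, Fin.ext_iff, Fin.val_succ, Fin.val_castSucc]
    grind
  have minor_first_diag (i : Fin n) : M.submatrix Fin.succ Fin.succ i i = c := by
    simp only [M, submatrix_apply, Fin.castSucc_succ, permBand_finRotate_apply, Fin.val_succ,
      Fin.val_castSucc]
    grind
  have minor_first_lower : (M.submatrix Fin.succ Fin.succ).IsLowerTriangular := by
    intro i j hij
    rw [OrderDual.toDual_lt_toDual] at hij
    simp only [M, submatrix_apply, Fin.castSucc_succ, permBand_finRotate_apply, Fin.val_succ,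
      Fin.val_castSucc]
    grind
  rw [permanent_of_row_zero (permBand_finRotate_zero_succ a b c), minor_last,
    permanent_of_isLowerTriangular minor_first_lower]
  simp only [minor_first_diag, prod_const, card_univ, Fintype.card_fin, pow_succ']
  ring

theorem permanent_permBand_finRotate : ∀ n : ℕ,
    (permBand a b c (finRotate (n + 1))).permanent =
      a ^ (n + 1) + c ^ (n + 1) + (dickson 1 (-(a * c)) (n + 1)).eval b
  | 0 => by simp [permBand_apply, add_comm, add_left_comm]
  | n + 1 => by
    rw [permanent_succ_column_zero]
    simp only [permBand_finRotate_zero_column, add_mul, ite_mul, zero_mul, sum_add_distrib,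
      sum_ite_eq', mem_univ, if_true, Fin.succAbove_last]
    rw [permanent_permBand_finRotate_submatrix_succAbove_one,
      permanent_permBand_finRotate_submatrix_castSucc, Fin.succAbove_zero,
      permBand_finRotate_submatrix_succ, permanent_tridiagonalToeplitz,
      permanent_tridiagonalToeplitz, dickson_one_add_two]
    simp only [eval_sub, eval_mul, eval_X, eval_C, eval_ofNat]
    ring

end PermBand

section CycleType

open Equiv Finset

variable {α : Type*} [Fintype α] {s : Perm α}

theorem exists_equiv_finRotate_of_isCycleOn_univ {n : ℕ} (hs : s.IsCycleOn Set.univ)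
    (hn : Fintype.card α = n + 1) :
    ∃ e : Fin (n + 1) ≃ α, ∀ i, e (finRotate (n + 1) i) = s (e i) := by
  obtain ⟨x⟩ : Nonempty α := Fintype.card_pos_iff.1 (by lia)
  rw [← coe_univ] at hs
  let f (i : Fin (n + 1)) : α := (s ^ (i : ℕ)) x
  have hf : Function.Surjective f := fun y ↦ by
    obtain ⟨i, hi, rfl⟩ := hs.exists_pow_eq (mem_univ x) (mem_univ y)
    exact ⟨⟨i, by rwa [card_univ, hn] at hi⟩, rfl⟩
  refine ⟨.ofBijective f (hf.bijective_of_nat_card_le (by simp [hn])), fun i ↦ ?_⟩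
  rw [ofBijective_apply, ofBijective_apply]
  have apply_f : s (f i) = (s ^ ((i : ℕ) + 1)) x := by rw [pow_succ', Perm.mul_apply]
  cases i using Fin.lastCases with
  | last =>
    have pow_apply : (s ^ (n + 1)) x = x := by
      rw [← hn, ← card_univ, hs.pow_card_apply (mem_univ x)]
    rw [apply_f, Fin.val_last, pow_apply, finRotate_last]
    rfl
  | cast i => rw [apply_f]; simp [f]

variable [DecidableEq α]

theorem parts_partition_of_isCycleOn_univ [Nonempty α] (hs : s.IsCycleOn Set.univ) :
    s.partition.parts = {Fintype.card α} := by
  rcases subsingleton_or_nontrivial α with _ | _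
  · have hcard : Fintype.card α = 1 :=
      le_antisymm (Fintype.card_le_one_iff_subsingleton.2 ‹_›) Fintype.card_pos
    simp [Perm.parts_partition, hcard, Subsingleton.elim s 1]
  · have hcyc : s.IsCycle := Perm.isCycle_iff_exists_isCycleOn.2
      ⟨Set.univ, Set.nontrivial_univ, hs, fun _ _ ↦ Set.mem_univ _⟩
    have hsupp : s.support = univ := eq_univ_of_forall fun x ↦
      Perm.mem_support.2 (hs.apply_ne Set.nontrivial_univ (Set.mem_univ x))
    simp [Perm.parts_partition, hcyc.cycleType, hsupp]

theorem ofSubtype_subtypePerm_mul_ofSubtype_subtypePerm_not {α : Type*} {s : Perm α}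
    {p : α → Prop} [DecidablePred p] (h : ∀ x, p (s x) ↔ p x) :
    Perm.ofSubtype (s.subtypePerm h) *
      Perm.ofSubtype (s.subtypePerm (p := fun x ↦ ¬p x) fun x ↦ not_congr (h x)) = s := by
  ext x
  rw [Perm.mul_apply]
  by_cases hx : p x
  · rw [Perm.ofSubtype_apply_of_not_mem (p := fun x ↦ ¬p x) _ (not_not.2 hx),
      Perm.ofSubtype_apply_of_mem _ hx, Perm.subtypePerm_apply]
  · rw [Perm.ofSubtype_apply_of_mem (p := fun x ↦ ¬p x) _ hx, Perm.subtypePerm_apply,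
      Perm.ofSubtype_apply_of_not_mem _ (mt (h x).1 hx)]

theorem disjoint_ofSubtype_ofSubtype_not {α : Type*} {p : α → Prop} [DecidablePred p]
    (u : Perm {x // p x}) (v : Perm {x // ¬p x}) :
    (Perm.ofSubtype u).Disjoint (Perm.ofSubtype v) := fun x ↦ by
  by_cases hx : p x
  · exact .inr (Perm.ofSubtype_apply_of_not_mem _ (not_not.2 hx))
  · exact .inl (Perm.ofSubtype_apply_of_not_mem _ hx)

theorem parts_partition_eq_add {p : α → Prop} [DecidablePred p] (h : ∀ x, p (s x) ↔ p x) :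
    s.partition.parts = (s.subtypePerm h).partition.parts +
      (s.subtypePerm (p := fun x ↦ ¬p x) fun x ↦ not_congr (h x)).partition.parts := by
  set u := s.subtypePerm h
  set v := s.subtypePerm (p := fun x ↦ ¬p x) fun x ↦ not_congr (h x)
  have hcycle : s.cycleType = u.cycleType + v.cycleType := by
    rw [← ofSubtype_subtypePerm_mul_ofSubtype_subtypePerm_not h,
      (disjoint_ofSubtype_ofSubtype_not u v).cycleType_mul, Perm.cycleType_ofSubtype,
      Perm.cycleType_ofSubtype]
  have hcard : Fintype.card α = Fintype.card {x // p x} + Fintype.card {x // ¬p x} := by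
    rw [← Fintype.card_sum, Fintype.card_congr (Equiv.sumCompl p)]
  have hsupport : #s.support = #u.support + #v.support := by
    simp only [← Perm.sum_cycleType, hcycle, Multiset.sum_add]
  have hfixed : Fintype.card α - #s.support =
      (Fintype.card {x // p x} - #u.support) + (Fintype.card {x // ¬p x} - #v.support) := by
    have := card_le_univ u.support
    have := card_le_univ v.support
    lia
  simp only [Perm.parts_partition, hcycle, hfixed, Multiset.replicate_add]
  abel

theorem exists_partition_eq (P : (Fintype.card α).Partition) : ∃ s : Perm α, s.partition = P := by
  have hsplit : P.parts.filter (2 ≤ ·) + P.parts.filter (¬2 ≤ ·) = P.parts :=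
    Multiset.filter_add_not _ _
  have hones : P.parts.filter (¬2 ≤ ·) = .replicate (P.parts.filter (¬2 ≤ ·)).card 1 :=
    Multiset.eq_replicate_card.2 fun k hk ↦ by
      have := P.parts_pos (Multiset.mem_filter.1 hk).1
      have := (Multiset.mem_filter.1 hk).2
      lia
  have hsum := congrArg Multiset.sum hsplit
  rw [Multiset.sum_add, hones, Multiset.sum_replicate, smul_eq_mul, mul_one, P.parts_sum] at hsum
  obtain ⟨s, hs⟩ := (Perm.exists_with_cycleType_iff α (m := P.parts.filter (2 ≤ ·))).2
    ⟨by lia, fun k hk ↦ (Multiset.mem_filter.1 hk).2⟩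
  refine ⟨s, Nat.Partition.ext ?_⟩
  rw [Perm.parts_partition, ← Perm.sum_cycleType, hs, Nat.sub_eq_of_eq_add' hsum.symm, ← hones,
    hsplit]

theorem apply_ne_of_forall_three_le_parts_partition (h : ∀ k ∈ s.partition.parts, 3 ≤ k) (x : α) :
    s x ≠ x ∧ s (s x) ≠ x := by
  rw [Perm.parts_partition] at h
  have hx : s x ≠ x := fun hx ↦ by
    have hlt : #s.support < Fintype.card α := card_lt_univ_of_notMem (Perm.notMem_support.2 hx)
    have hone : 1 ∈ Multiset.replicate (Fintype.card α - #s.support) 1 :=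
      Multiset.mem_replicate.2 ⟨by lia, rfl⟩
    exact absurd (h 1 (Multiset.mem_add.2 (.inr hone))) (by lia)
  refine ⟨hx, fun hxx ↦ ?_⟩
  have hcycle := Perm.isCycle_cycleOf s hx
  have hsq : s.cycleOf x ^ 2 = 1 :=
    hcycle.pow_eq_one_iff.2 ⟨x, by rwa [Perm.cycleOf_apply_self], by simp [sq, hxx]⟩
  have hmem : #(s.cycleOf x).support ∈ s.cycleType := by
    rw [Perm.cycleType_def]
    exact Multiset.mem_map.2
      ⟨_, Perm.cycleOf_mem_cycleFactorsFinset_iff.2 (Perm.mem_support.2 hx), rfl⟩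
  have hle := Nat.le_of_dvd two_pos (orderOf_dvd_of_pow_eq_one hsq)
  rw [hcycle.orderOf] at hle
  exact absurd (h _ (Multiset.mem_add.2 (.inl hmem))) (by lia)

theorem three_le_of_mem_parts_partition (h : ∀ x, s x ≠ x ∧ s (s x) ≠ x) {k : ℕ}
    (hk : k ∈ s.partition.parts) : 3 ≤ k := by
  have hsupport : s.support = univ := eq_univ_of_forall fun x ↦ Perm.mem_support.2 (h x).1
  rw [Perm.parts_partition, hsupport, card_univ, Nat.sub_self, Multiset.replicate_zero,
    add_zero] at hk
  refine (Perm.two_le_of_mem_cycleType hk).lt_of_ne' fun hk_two ↦ ?_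
  rw [Perm.cycleType_def] at hk
  obtain ⟨c, hc, rfl⟩ := Multiset.mem_map.1 hk
  obtain ⟨hcycle, hcs⟩ := Perm.mem_cycleFactorsFinset_iff.1 hc
  obtain ⟨x, hx⟩ := hcycle.nonempty_support
  have hsq : c ^ 2 = 1 := by
    rw [← hk_two, Function.comp_apply, ← hcycle.orderOf, pow_orderOf_eq_one]
  refine (h x).2 ?_
  rw [← hcs x hx, ← hcs (c x) (Perm.apply_mem_support.2 hx), ← Perm.mul_apply, ← sq, hsq,
    Perm.one_apply]

theorem forall_three_le_parts_partition_iff :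
    (∀ k ∈ s.partition.parts, 3 ≤ k) ↔ ∀ x, s x ≠ x ∧ s (s x) ≠ x :=
  ⟨apply_ne_of_forall_three_le_parts_partition, fun h _ ↦ three_le_of_mem_parts_partition h⟩

end CycleType

section Product

open Equiv Finset Polynomial

variable {R : Type*} [CommRing R] {α : Type*} [Fintype α] [DecidableEq α] (a b c : R)

theorem permanent_permBand_eq_of_equiv {β : Type*} [Fintype β] [DecidableEq β] {s : Perm α}
    {t : Perm β} (e : α ≃ β) (h : ∀ x, e (s x) = t (e x)) :
    (permBand a b c s).permanent = (permBand a b c t).permanent := by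
  rw [← permanent_submatrix_equiv_self e]
  congr 1
  ext x y
  simp [permBand_apply, ← h]

theorem permanent_permBand_eq_mul {s : Perm α} {p : α → Prop} [DecidablePred p]
    (h : ∀ x, p (s x) ↔ p x) :
    (permBand a b c s).permanent = (permBand a b c (s.subtypePerm h)).permanent *
      (permBand a b c
        (s.subtypePerm (p := fun x ↦ ¬p x) fun x ↦ not_congr (h x))).permanent := by
  rw [← permanent_submatrix_equiv_self (Equiv.sumCompl p), ← permanent_fromBlocks_zero₂₁ _ 0]
  congr 1
  ext (⟨x, hx⟩ | ⟨x, hx⟩) (⟨y, hy⟩ | ⟨y, hy⟩)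
  · simp [permBand_apply]
  · have : x ≠ y ∧ s x ≠ y ∧ s y ≠ x := by grind
    simp [permBand_apply, this]
  · have : x ≠ y ∧ s x ≠ y ∧ s y ≠ x := by grind
    simp [permBand_apply, this]
  · simp [permBand_apply]

theorem permanent_permBand_of_isCycleOn_univ [Nonempty α] {s : Perm α}
    (hs : s.IsCycleOn Set.univ) :
    (permBand a b c s).permanent = a ^ Fintype.card α + c ^ Fintype.card α +
      (dickson 1 (-(a * c)) (Fintype.card α)).eval b := by
  obtain ⟨n, hn⟩ := Nat.exists_eq_add_one.2 (Fintype.card_pos (α := α))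
  obtain ⟨e, he⟩ := exists_equiv_finRotate_of_isCycleOn_univ hs hn
  rw [hn, ← permanent_permBand_finRotate, permanent_permBand_eq_of_equiv a b c e he]

theorem permanent_permBand {α : Type*} [Fintype α] [DecidableEq α] (s : Perm α) :
    (permBand a b c s).permanent = (s.partition.parts.map fun k ↦
      a ^ k + c ^ k + (dickson 1 (-(a * c)) k).eval b).prod := by
  rcases isEmpty_or_nonempty α with hα | ⟨⟨x⟩⟩
  · simp [permanent_isEmpty, Perm.parts_partition, Subsingleton.elim s 1]
  have hcycle (y) : s.SameCycle x (s y) ↔ s.SameCycle x y := Perm.sameCycle_apply_right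
  have : Nonempty {y // s.SameCycle x y} := ⟨⟨x, .refl s x⟩⟩
  have hcyc : (s.subtypePerm hcycle).IsCycleOn Set.univ :=
    ⟨(Equiv.bijective _).bijOn_univ,
      fun y _ z _ ↦ Perm.sameCycle_subtypePerm.2 (y.2.symm.trans z.2)⟩
  rw [permanent_permBand_eq_mul a b c hcycle, parts_partition_eq_add hcycle,
    parts_partition_of_isCycleOn_univ hcyc, permanent_permBand_of_isCycleOn_univ a b c hcyc,
    permanent_permBand, Multiset.map_add, Multiset.prod_add, Multiset.map_singleton,
    Multiset.prod_singleton]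
termination_by Fintype.card α
decreasing_by exact Fintype.card_subtype_lt (x := x) (not_not.2 (.refl s x))

end Product

section Values

open Equiv Polynomial

variable {R : Type*} [CommRing R] {α : Type*} [Fintype α] [DecidableEq α]

theorem permanent_permBand_neg_one_two_one (s : Perm α) :
    (permBand (-1 : R) 2 1 s).permanent =
      (s.partition.parts.map fun k ↦ 3 + (-1 : R) ^ k).prod := by
  have eval_dickson (k : ℕ) : (dickson 1 (1 : R) k).eval 2 = 2 := by
    simpa [one_add_one_eq_two] using dickson_one_one_eval_add_inv (1 : R) 1 (mul_one 1) k
  rw [permanent_permBand]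
  congr 2 with k
  rw [neg_one_mul, neg_neg, eval_dickson]
  ring

theorem exists_prod_map_three_add_neg_one_pow (m : Multiset ℕ) (hm : ∀ k ∈ m, 3 ≤ k) :
    ∃ j, (m.map fun k ↦ 3 + (-1 : R) ^ k).prod = 4 ^ j * 2 ^ (m.sum % 2) ∧
      4 * j + 3 * (m.sum % 2) ≤ m.sum ∧ (m.sum ≠ 0 → 0 < j + m.sum % 2) := by
  induction m using Multiset.induction with
  | empty => exact ⟨0, by simp⟩
  | cons k m ih =>
    obtain ⟨hk, hm⟩ := Multiset.forall_mem_cons.1 hm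
    obtain ⟨j, hprod, hle, -⟩ := ih hm
    rw [Multiset.map_cons, Multiset.prod_cons, Multiset.sum_cons, hprod]
    rcases Nat.even_or_odd k with hk_even | hk_odd
    · have hmod : (k + m.sum) % 2 = m.sum % 2 := by grind
      refine ⟨j + 1, ?_, by grind, by lia⟩
      rw [hk_even.neg_one_pow, hmod]
      ring
    · rcases Nat.mod_two_eq_zero_or_one m.sum with hsum | hsum
      · have hmod : (k + m.sum) % 2 = 1 := by grind
        refine ⟨j, ?_, by lia, by lia⟩
        rw [hk_odd.neg_one_pow, hmod, hsum]
        ring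
      · have hmod : (k + m.sum) % 2 = 0 := by grind
        refine ⟨j + 1, ?_, by lia, by lia⟩
        rw [hk_odd.neg_one_pow, hmod, hsum]
        ring

theorem exists_partition_prod_map_three_add_neg_one_pow {n j : ℕ} (hpos : 0 < j + n % 2)
    (hle : 4 * j + 3 * (n % 2) ≤ n) :
    ∃ P : n.Partition, (∀ k ∈ P.parts, 3 ≤ k) ∧
      (P.parts.map fun k ↦ 3 + (-1 : R) ^ k).prod = 4 ^ j * 2 ^ (n % 2) := by
  obtain ⟨i, hi⟩ := Nat.exists_eq_add_one.2 hpos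
  have hmem : ∀ k ∈ Multiset.replicate i 4 + {n - 4 * i}, 3 ≤ k := fun k hk ↦ by
    rcases Multiset.mem_add.1 hk with hk | hk
    · rw [Multiset.eq_of_mem_replicate hk]
      lia
    · rw [Multiset.mem_singleton.1 hk]
      lia
  refine ⟨⟨.replicate i 4 + {n - 4 * i}, fun hk ↦ three_pos.trans_le (hmem _ hk), ?_⟩, hmem, ?_⟩
  · rw [Multiset.sum_add, Multiset.sum_replicate, Multiset.sum_singleton, smul_eq_mul]
    lia
  rw [Multiset.map_add, Multiset.prod_add, Multiset.map_replicate, Multiset.prod_replicate,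
    Multiset.map_singleton, Multiset.prod_singleton]
  rcases Nat.mod_two_eq_zero_or_one n with hn | hn
  · have hlast : Even (n - 4 * i) := by grind
    rw [hlast.neg_one_pow, hn, show j = i + 1 by lia]
    ring
  · have hlast : Odd (n - 4 * i) := by grind
    rw [hlast.neg_one_pow, hn, show j = i by lia]
    ring

theorem exists_permanent_permBand_neg_one_two_one_iff [Nonempty α] {x : R} :
    (∃ s : Perm α, (∀ y, s y ≠ y ∧ s (s y) ≠ y) ∧ (permBand (-1) 2 1 s).permanent = x) ↔
      ∃ j, 0 < j + Fintype.card α % 2 ∧ 4 * j + 3 * (Fintype.card α % 2) ≤ Fintype.card α ∧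
        x = 4 ^ j * 2 ^ (Fintype.card α % 2) := by
  simp only [← forall_three_le_parts_partition_iff, permanent_permBand_neg_one_two_one]
  constructor
  · rintro ⟨s, hs, rfl⟩
    obtain ⟨j, hprod, hle, hpos⟩ := exists_prod_map_three_add_neg_one_pow (R := R) _ hs
    rw [s.partition.parts_sum] at hprod hle hpos
    exact ⟨j, hpos Fintype.card_ne_zero, hle, hprod⟩
  · rintro ⟨j, hpos, hle, rfl⟩
    obtain ⟨P, hP, hprod⟩ := exists_partition_prod_map_three_add_neg_one_pow (R := R) hpos hle
    obtain ⟨s, rfl⟩ := exists_partition_eq P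
    exact ⟨s, hP, hprod⟩

theorem exists_mem_LambdaHat_permanent_eq_iff {n : ℕ} {a b c x : ℝ} :
    (∃ A ∈ LambdaHat n a b c, A.permanent = x) ↔ ∃ s : Perm (Fin n),
      (∀ i, s i ≠ i ∧ s (s i) ≠ i) ∧ (permBand a b c s).permanent = x :=
  ⟨fun ⟨_, ⟨s, hs, hA⟩, hx⟩ ↦ ⟨s, hs, hx ▸ congrArg permanent hA.symm⟩,
    fun ⟨s, hs, hx⟩ ↦ ⟨_, ⟨s, hs, rfl⟩, hx⟩⟩

end Values

theorem stmt_17_general (R : Type*) [CommRing R] (α : Type*) [Fintype α] [DecidableEq α]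
    [Nonempty α] :
    (Even (Fintype.card α) →
      {x : R | ∃ s : Equiv.Perm α, (∀ y, s y ≠ y ∧ s (s y) ≠ y) ∧
        (permBand (-1) 2 1 s).permanent = x} =
        {x : R | ∃ j : ℕ, 1 ≤ j ∧ j ≤ Fintype.card α / 4 ∧ x = 4 ^ j}) ∧
    (3 ≤ Fintype.card α → Odd (Fintype.card α) →
      {x : R | ∃ s : Equiv.Perm α, (∀ y, s y ≠ y ∧ s (s y) ≠ y) ∧
        (permBand (-1) 2 1 s).permanent = x} =
        {x : R | ∃ j : ℕ, j ≤ (Fintype.card α - 3) / 4 ∧ x = 2 * 4 ^ j}) := by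
  simp only [exists_permanent_permBand_neg_one_two_one_iff]
  refine ⟨fun heven ↦ ?_, fun hcard hodd ↦ ?_⟩
  · simp only [Nat.even_iff.1 heven, add_zero, mul_zero, pow_zero, mul_one,
      Nat.le_div_iff_mul_le four_pos, mul_comm 4, Nat.succ_le_iff]
  · simp only [Nat.odd_iff.1 hodd, Nat.le_div_iff_mul_le four_pos, mul_comm _ 4, Nat.succ_pos,
      true_and, mul_one, pow_one, Nat.le_sub_iff_add_le hcard, mul_comm _ (2 : R)]

theorem stmt_17 (n : ℕ) :
    (4 ≤ n → Even n →
      {x : ℝ | ∃ A ∈ LambdaHat n (-1) 2 1, A.permanent = x} =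
        {x : ℝ | ∃ j : ℕ, 1 ≤ j ∧ j ≤ n / 4 ∧ x = 4 ^ j}) ∧
    (3 ≤ n → Odd n →
      {x : ℝ | ∃ A ∈ LambdaHat n (-1) 2 1, A.permanent = x} =
        {x : ℝ | ∃ j : ℕ, j ≤ (n - 3) / 4 ∧ x = 2 * 4 ^ j}) := by
  cases n with
  | zero => simp
  | succ n =>
    simpa [exists_mem_LambdaHat_permanent_eq_iff] using
      And.imp_left (fun h _ ↦ h) (stmt_17_general ℝ (Fin (n + 1)))
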